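/- arXiv:2302.08234 — 6 statements merged into one kernel-verified Lean document; each statement's English description precedes it below -/
import Mathlib

section
/- Let λ > 0 and let n ≥ 1 be an integer. Let S_n be the sum of n i.i.d. exponential random variables with rate λ (i.e., the sum function on the n-fold product of the exponential measure with rate λ). Then for every t with 0 < t ≤ 1: ℙ(S_n ≥ (1+t)·n/λ) ≤ exp(−n t²/4) and ℙ(S_n ≤ (1−t)·n/λ) ≤ exp(−n t²/4). -/
open MeasureTheory ProbabilityTheory Real

/-- The moment generating function of the exponential distribution, as a Lebesgue integral. -/
lemma lintegral_exp_mul_expMeasure {r s : ℝ} (hr : 0 < r) (hs : s < r) :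
    ∫⁻ x, ENNReal.ofReal (exp (s * x)) ∂(expMeasure r) = ENNReal.ofReal (r / (r - s)) := by
  have hrs : 0 < r - s := sub_pos.2 hs
  have hdens : expMeasure r = volume.withDensity (exponentialPDF r) := rfl
  have hmeas : ∀ q, Measurable (exponentialPDF q) := fun q =>
    (measurable_exponentialPDFReal q).ennreal_ofReal
  rw [hdens, lintegral_withDensity_eq_lintegral_mul _ (hmeas r) (by fun_prop)]
  calc
    _ = ∫⁻ x, ENNReal.ofReal (r / (r - s)) * exponentialPDF (r - s) x := by
      refine lintegral_congr fun x => ?_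
      rw [Pi.mul_apply]
      rcases lt_or_ge x 0 with hx | hx
      · simp [exponentialPDF_of_neg hx]
      · rw [exponentialPDF_of_nonneg hx, exponentialPDF_of_nonneg hx,
          ← ENNReal.ofReal_mul (by positivity), ← ENNReal.ofReal_mul (by positivity),
          mul_assoc, ← exp_add, ← mul_assoc, div_mul_cancel₀ _ hrs.ne']
        ring_nf
    _ = _ := by
      rw [lintegral_const_mul _ (hmeas _), lintegral_exponentialPDF_eq_one hrs, mul_one]

/-- The Chernoff bound for a sum of independent exponential random variables. -/
lemma measure_pi_expMeasure_le_mul_sum_le {r s : ℝ} (hr : 0 < r) (hs : s < r) (n : ℕ) (c : ℝ) :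
    (Measure.pi (fun _ : Fin n => expMeasure r)) {ω : Fin n → ℝ | c ≤ s * ∑ i, ω i}
      ≤ ENNReal.ofReal (exp (-c) * (r / (r - s)) ^ n) := by
  have := isProbabilityMeasure_expMeasure hr
  have hrs : 0 < r - s := sub_pos.2 hs
  have hint : ∫⁻ ω : Fin n → ℝ, ENNReal.ofReal (exp (s * ∑ i, ω i))
      ∂(Measure.pi fun _ => expMeasure r) = ENNReal.ofReal ((r / (r - s)) ^ n) := by
    simp_rw [Finset.mul_sum, exp_sum, ENNReal.ofReal_prod_of_nonneg fun _ _ => (exp_pos _).le]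
    have hexp : Measurable fun x => ENNReal.ofReal (exp (s * x)) := by fun_prop
    rw [lintegral_prod_eq_prod_lintegral_of_indepFun Finset.univ
      (fun i (ω : Fin n → ℝ) => ENNReal.ofReal (exp (s * ω i)))
      (iIndepFun_pi fun _ => hexp.aemeasurable) (by fun_prop)]
    have heval (i : Fin n) : ∫⁻ ω : Fin n → ℝ, ENNReal.ofReal (exp (s * ω i))
        ∂(Measure.pi fun _ => expMeasure r) = ENNReal.ofReal (r / (r - s)) :=
      ((measurePreserving_eval (fun _ : Fin n => expMeasure r) i).lintegral_comp hexp).trans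
        (lintegral_exp_mul_expMeasure hr hs)
    simp [heval, ENNReal.ofReal_pow (div_pos hr hrs).le]
  calc
    _ ≤ (Measure.pi fun _ : Fin n => expMeasure r)
          {ω | ENNReal.ofReal (exp c) ≤ ENNReal.ofReal (exp (s * ∑ i, ω i))} :=
      measure_mono fun ω hω => ENNReal.ofReal_le_ofReal (exp_le_exp.2 hω)
    _ ≤ ENNReal.ofReal ((r / (r - s)) ^ n) / ENNReal.ofReal (exp c) := by
      rw [← hint]
      exact meas_ge_le_lintegral_div (by fun_prop) (by simp [exp_pos]) ENNReal.ofReal_ne_top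
    _ = _ := by
      rw [← ENNReal.ofReal_div_of_pos (exp_pos c), exp_neg, div_eq_inv_mul]

lemma one_add_le_exp_sub_sq_div_four {t : ℝ} (ht0 : 0 ≤ t) (ht1 : t ≤ 1) :
    1 + t ≤ exp (t - t ^ 2 / 4) := by
  have h : 3 / 4 * t ≤ t - t ^ 2 / 4 := by nlinarith
  have := quadratic_le_exp_of_nonneg (x := t - t ^ 2 / 4) (by linarith)
  nlinarith [mul_self_le_mul_self (by positivity) h]

lemma exp_sub_sq_le_one_add {t : ℝ} (ht0 : 0 ≤ t) :
    exp (t - 3 / 4 * t ^ 2) ≤ 1 + t := by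
  rw [← le_log_iff_exp_le (by positivity)]
  refine le_trans ?_ (le_log_one_add_of_nonneg ht0)
  rw [le_div_iff₀ (by positivity)]
  nlinarith [sq_nonneg t, pow_nonneg ht0 3]

/-- Lemma 2 (Arrival Rate Estimation), quantitative content: the sum `S_n` of `n` i.i.d.
exponential random variables with rate `λ` satisfies the two-sided tail bounds
`ℙ(S_n ≥ (1+t)·n/λ) ≤ exp(-n t²/4)` and `ℙ(S_n ≤ (1-t)·n/λ) ≤ exp(-n t²/4)`
for every `0 < t ≤ 1`. -/
theorem exp_sum_concentration (lam : ℝ) (hlam : 0 < lam) (n : ℕ) (hn : 1 ≤ n)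
    (t : ℝ) (ht0 : 0 < t) (ht1 : t ≤ 1) :
    (Measure.pi (fun _ : Fin n => expMeasure lam))
        {ω : Fin n → ℝ | (1 + t) * n / lam ≤ ∑ i, ω i}
      ≤ ENNReal.ofReal (Real.exp (-(n * t ^ 2) / 4)) ∧
    (Measure.pi (fun _ : Fin n => expMeasure lam))
        {ω : Fin n → ℝ | ∑ i, ω i ≤ (1 - t) * n / lam}
      ≤ ENNReal.ofReal (Real.exp (-(n * t ^ 2) / 4)) := by
  have h1t : 0 < 1 + t := by linarith
  constructor
  · have hs : lam * t / (1 + t) < lam := by rw [div_lt_iff₀ h1t]; nlinarith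
    have hmgf : lam / (lam - lam * t / (1 + t)) = 1 + t := by
      have : lam - lam * t / (1 + t) = lam / (1 + t) := by field_simp; ring
      rw [this]; field_simp
    calc
      _ ≤ (Measure.pi (fun _ : Fin n => expMeasure lam))
            {ω : Fin n → ℝ | n * t ≤ lam * t / (1 + t) * ∑ i, ω i} := by
        refine measure_mono fun ω hω => ?_
        have h := mul_le_mul_of_nonneg_left (Set.mem_ofPred_eq ▸ hω)
          (show 0 ≤ lam * t / (1 + t) by positivity)
        refine le_trans (le_of_eq ?_) h
        field_simp
      _ ≤ ENNReal.ofReal (exp (-(n * t)) * (1 + t) ^ n) := by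
        simpa only [hmgf] using measure_pi_expMeasure_le_mul_sum_le hlam hs n (n * t)
      _ ≤ ENNReal.ofReal (exp (-(n * t)) * exp (t - t ^ 2 / 4) ^ n) := by
        gcongr
        exact one_add_le_exp_sub_sq_div_four ht0.le ht1
      _ = _ := by
        rw [← exp_nat_mul, ← exp_add]
        ring_nf
  · have hs : -(lam * t) < lam := by nlinarith
    have hmgf : lam / (lam - -(lam * t)) = (1 + t)⁻¹ := by
      have : lam - -(lam * t) = lam * (1 + t) := by ring
      rw [this]; field_simp
    calc
      _ ≤ (Measure.pi (fun _ : Fin n => expMeasure lam))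
            {ω : Fin n → ℝ | -(n * (t * (1 - t))) ≤ -(lam * t) * ∑ i, ω i} := by
        refine measure_mono fun ω hω => ?_
        have h := mul_le_mul_of_nonneg_left (Set.mem_ofPred_eq ▸ hω)
          (show 0 ≤ lam * t by positivity)
        have heq : lam * t * ((1 - t) * n / lam) = n * (t * (1 - t)) := by field_simp
        rw [heq] at h
        rw [Set.mem_ofPred_eq, neg_mul]
        exact neg_le_neg h
      _ ≤ ENNReal.ofReal (exp (n * (t * (1 - t))) * (1 + t)⁻¹ ^ n) := by
        simpa only [hmgf, neg_neg] using
          measure_pi_expMeasure_le_mul_sum_le hlam hs n (-(n * (t * (1 - t))))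
      _ ≤ ENNReal.ofReal (exp (n * (t * (1 - t))) * (exp (t - 3 / 4 * t ^ 2))⁻¹ ^ n) := by
        gcongr
        exact exp_sub_sq_le_one_add ht0.le
      _ = _ := by
        rw [← exp_neg, ← exp_nat_mul, ← exp_add]
        ring_nf
end

section
/- Let U and V be finite sets, let T > 0, α ∈ [0,1], Δ ≥ 0, and let λ, λ̂ : V → ℝ be positive functions with λ(v) ≤ (1+Δ)·λ̂(v) for all v ∈ V. Let w : U × V → ℝ be nonnegative. For μ : V → ℝ and S > 0 call x : U × V → ℝ feasible for LP(μ, S) if 0 ≤ x(u,v) ≤ 1 for all u, v, ∑_{u∈U} x(u,v) ≤ μ(v)·S for all v, and ∑_{v∈V} x(u,v) ≤ 1 for all u. Then for every x feasible for LP(λ, T), the scaled vector ((1−α)/(1+Δ))·x is feasible for LP(λ̂, (1−α)T); consequently, the supremum of ∑_{u,v} w(u,v)·x(u,v) over x feasible for LP(λ̂, (1−α)T) is at least ((1−α)/(1+Δ)) times the supremum over x feasible for LP(λ, T). -/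
open Finset

/-- `x` is a feasible solution for the matching LP with arrival rates `μ` and horizon `S`. -/
def LPFeasible {U V : Type*} [Fintype U] [Fintype V]
    (μ : V → ℝ) (S : ℝ) (x : U × V → ℝ) : Prop :=
  (∀ u v, 0 ≤ x (u, v) ∧ x (u, v) ≤ 1) ∧
  (∀ v, ∑ u, x (u, v) ≤ μ v * S) ∧
  (∀ u, ∑ v, x (u, v) ≤ 1)

/-- The objective value of a feasible solution is at most the total weight. -/
theorem LPFeasible.sum_weight_mul_le {U V : Type*} [Fintype U] [Fintype V]
    {μ : V → ℝ} {S : ℝ} {x : U × V → ℝ} (hx : LPFeasible μ S x)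
    {w : U × V → ℝ} (hw : ∀ p, 0 ≤ w p) : ∑ p, w p * x p ≤ ∑ p, w p :=
  Finset.sum_le_sum fun p _ => mul_le_of_le_one_right (hw p) (hx.1 p.1 p.2).2

/-- The objective value of a feasible solution is nonnegative. -/
theorem LPFeasible.sum_weight_mul_nonneg {U V : Type*} [Fintype U] [Fintype V]
    {μ : V → ℝ} {S : ℝ} {x : U × V → ℝ} (hx : LPFeasible μ S x)
    {w : U × V → ℝ} (hw : ∀ p, 0 ≤ w p) : 0 ≤ ∑ p, w p * x p :=
  Finset.sum_nonneg fun p _ => mul_nonneg (hw p) (hx.1 p.1 p.2).1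

/-- Scaling by `c ∈ [0, 1]` preserves feasibility when the arrival bounds scale accordingly. -/
theorem LPFeasible.const_mul {U V : Type*} [Fintype U] [Fintype V]
    {μ ν : V → ℝ} {S R c : ℝ} {x : U × V → ℝ} (hx : LPFeasible μ S x)
    (hc0 : 0 ≤ c) (hc1 : c ≤ 1) (hμν : ∀ v, c * (μ v * S) ≤ ν v * R) :
    LPFeasible ν R (fun p => c * x p) := by
  obtain ⟨hbox, harr, hcap⟩ := hx
  refine ⟨fun u v => ⟨mul_nonneg hc0 (hbox u v).1,
    mul_le_one₀ hc1 (hbox u v).1 (hbox u v).2⟩, fun v => ?_, fun u => ?_⟩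
  · rw [← Finset.mul_sum]
    exact (mul_le_mul_of_nonneg_left (harr v) hc0).trans (hμν v)
  · rw [← Finset.mul_sum]
    exact mul_le_one₀ hc1 (Finset.sum_nonneg fun v _ => (hbox u v).1) (hcap u)

/-- Lemma 4: scaling a feasible solution of `LP(λ, T)` by `(1-α)/(1+Δ)` yields a feasible
solution of `LP(λ̂, (1-α)T)` whenever `λ v ≤ (1+Δ)·λ̂ v`; consequently the optimal value of
`LP(λ̂, (1-α)T)` is at least `(1-α)/(1+Δ)` times the optimal value of `LP(λ, T)`. -/
theorem lp_scaling {U V : Type*} [Fintype U] [Fintype V]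
    (T α Δ : ℝ) (hT : 0 < T) (hα0 : 0 ≤ α) (hα1 : α ≤ 1) (hΔ : 0 ≤ Δ)
    (lam lamhat : V → ℝ) (hlam : ∀ v, 0 < lam v) (hlamhat : ∀ v, 0 < lamhat v)
    (hest : ∀ v, lam v ≤ (1 + Δ) * lamhat v)
    (w : U × V → ℝ) (hw : ∀ p, 0 ≤ w p) :
    (∀ x : U × V → ℝ, LPFeasible lam T x →
        LPFeasible lamhat ((1 - α) * T) (fun p => (1 - α) / (1 + Δ) * x p)) ∧
    sSup {r : ℝ | ∃ x : U × V → ℝ,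
        LPFeasible lamhat ((1 - α) * T) x ∧ r = ∑ p : U × V, w p * x p} ≥
      (1 - α) / (1 + Δ) *
        sSup {r : ℝ | ∃ x : U × V → ℝ, LPFeasible lam T x ∧ r = ∑ p : U × V, w p * x p} := by
  have hΔ' : 0 < 1 + Δ := by linarith
  have hc0 : 0 ≤ (1 - α) / (1 + Δ) := div_nonneg (by linarith) hΔ'.le
  have hc1 : (1 - α) / (1 + Δ) ≤ 1 := by rw [div_le_one hΔ']; linarith
  have hscale : ∀ x : U × V → ℝ, LPFeasible lam T x →
      LPFeasible lamhat ((1 - α) * T) (fun p => (1 - α) / (1 + Δ) * x p) := by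
    refine fun x hx => hx.const_mul hc0 hc1 fun v => ?_
    calc (1 - α) / (1 + Δ) * (lam v * T)
        ≤ (1 - α) / (1 + Δ) * ((1 + Δ) * lamhat v * T) := by
          gcongr
          exact hest v
      _ = lamhat v * ((1 - α) * T) := by field_simp
  refine ⟨hscale, ?_⟩
  rw [ge_iff_le, ← smul_eq_mul, ← Real.sSup_smul_of_nonneg hc0]
  refine Real.sSup_le ?_ (Real.sSup_nonneg ?_)
  · rintro _ ⟨_, ⟨x, hx, rfl⟩, rfl⟩
    refine le_csSup ⟨∑ p, w p, ?_⟩ ⟨_, hscale x hx, ?_⟩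
    · rintro _ ⟨y, hy, rfl⟩
      exact hy.sum_weight_mul_le hw
    · simp only [smul_eq_mul, Finset.mul_sum, mul_left_comm]
  · rintro _ ⟨y, hy, rfl⟩
    exact hy.sum_weight_mul_nonneg hw
end

section
/- Let D be a positive integer, let ι be a finite set (of packed items), let r : ι → Fin D → ℝ be nonnegative demand vectors and C : Fin D → ℝ be a nonnegative capacity vector. Suppose (i) for every dimension d, ∑_{i∈ι} r(i)(d) ≤ C(d), and (ii) for every item i there exists a dimension d with r(i)(d) > C(d)/2. Then the cardinality of ι is at most D. -/
open Finset

/-- At most `D` items connected by heavy edges fit in one `D`-dimensional bin: if each item's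
demand exceeds half the capacity in some dimension while total demands respect capacities,
then there are at most `D` items. -/
theorem heavy_items_card_le (D : ℕ) (hD : 0 < D) (ι : Type*) [Fintype ι]
    (r : ι → Fin D → ℝ) (C : Fin D → ℝ)
    (hr : ∀ i d, 0 ≤ r i d) (hC : ∀ d, 0 ≤ C d)
    (hcap : ∀ d, ∑ i, r i d ≤ C d)
    (hheavy : ∀ i, ∃ d, C d / 2 < r i d) :
    Fintype.card ι ≤ D := by
  classical
  choose f hf using hheavy
  have hinj : Function.Injective f := by
    intro i j hij
    by_contra hne
    have hpair : ∑ k ∈ {i, j}, r k (f i) ≤ ∑ k, r k (f i) :=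
      sum_le_sum_of_subset_of_nonneg (subset_univ _) fun k _ _ => hr k (f i)
    rw [sum_pair hne] at hpair
    have hi := hf i
    have hj := hf j
    rw [← hij] at hj
    linarith [hcap (f i)]
  simpa using Fintype.card_le_of_injective f hinj
end

section
/- Let D be a positive integer and let h be a real number with 0 ≤ h ≤ 1/(2D). Then g(h) := 2D/(2D+1) − h/(2D+1) + (2D² − D)·h + D²·h² − D − 2D²·(1+h)·ln(2D(1+h)/(2D+1)) ≥ 0. -/
open Real

/-- The key inequality `g(h) ≥ 0` for `0 ≤ h ≤ 1/(2D)` in the proof of Corollary 3. -/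
theorem g_nonneg (D : ℕ) (hD : 0 < D) (h : ℝ) (hh0 : 0 ≤ h) (hh1 : h ≤ 1 / (2 * (D : ℝ))) :
    2 * (D : ℝ) / (2 * D + 1) - h / (2 * D + 1) + (2 * (D : ℝ) ^ 2 - D) * h
        + (D : ℝ) ^ 2 * h ^ 2 - D
        - 2 * (D : ℝ) ^ 2 * (1 + h) * Real.log (2 * D * (1 + h) / (2 * D + 1)) ≥ 0 := by
  have one_le_D : (1 : ℝ) ≤ D := by exact_mod_cast hD
  generalize (D : ℝ) = d at *
  have hdh : h * (2 * d) ≤ 1 := (le_div_iff₀ (by positivity)).mp hh1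
  have log_le : Real.log (2 * d * (1 + h) / (2 * d + 1)) ≤ 2 * d * (1 + h) / (2 * d + 1) - 1 :=
    Real.log_le_sub_one_of_pos (by positivity)
  have mul_log_le := mul_le_mul_of_nonneg_left log_le
    (show 0 ≤ 2 * d ^ 2 * (1 + h) by positivity)
  have poly_nonneg : 0 ≤ d + (2 * d ^ 2 - d - 1) * h + (d ^ 2 - 2 * d ^ 3) * h ^ 2 := by
    have linear_nonneg : 0 ≤ (2 * d ^ 2 - d - 1) * h := mul_nonneg (by nlinarith) hh0
    have sq_le : (h * (2 * d)) ^ 2 ≤ 1 := pow_le_one₀ (by positivity) hdh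
    have cubic_le : d * (h * (2 * d)) ^ 2 ≤ d * 1 :=
      mul_le_mul_of_nonneg_left sq_le (by positivity)
    nlinarith [sq_nonneg (d * h)]
  have eq_poly_div : 2 * d / (2 * d + 1) - h / (2 * d + 1) + (2 * d ^ 2 - d) * h
        + d ^ 2 * h ^ 2 - d - 2 * d ^ 2 * (1 + h) * (2 * d * (1 + h) / (2 * d + 1) - 1)
      = (d + (2 * d ^ 2 - d - 1) * h + (d ^ 2 - 2 * d ^ 3) * h ^ 2) / (2 * d + 1) := by
    field_simp
    ring
  have div_nonneg' := div_nonneg poly_nonneg (show 0 ≤ 2 * d + 1 by positivity)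
  linarith
end

section
/- Let D be a positive integer and set η* := 2 − 1/(2D) − √(1 + 1/(4D²)). Then (1 − η*)·(1 − D(1 − η*)) = √(4D² + 1) − 2D, and for every real number η: exp(−η)·(1 − η)·(1 − D(1 − η)) ≤ exp(−η*)·(√(4D² + 1) − 2D). -/
open Real

/-- A point `a` where a concave quadratic `x * (1 - d * x)` is nonnegative and equals minus its
derivative is a global maximizer of `exp x * (x * (1 - d * x))`. -/
theorem exp_mul_quadratic_le_of_critical {d a : ℝ} (hd : 0 ≤ d) (ha : 0 ≤ a * (1 - d * a))
    (hcrit : 1 - 2 * d * a = -(a * (1 - d * a))) (x : ℝ) :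
    exp x * (x * (1 - d * x)) ≤ exp a * (a * (1 - d * a)) := by
  have hexp : exp a = exp x * exp (a - x) := by rw [← exp_add]; congr 1; ring
  have htangent : x * (1 - d * x) ≤ a * (1 - d * a) * (a - x + 1) := by
    have hexpand : x * (1 - d * x) =
        a * (1 - d * a) + (1 - 2 * d * a) * (x - a) - d * (x - a) ^ 2 := by ring
    rw [hexpand, hcrit]
    linarith [mul_nonneg hd (sq_nonneg (x - a))]
  rw [hexp, mul_assoc]
  refine mul_le_mul_of_nonneg_left ?_ (exp_pos x).le
  linarith [mul_le_mul_of_nonneg_left (add_one_le_exp (a - x)) ha]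

theorem sqrt_one_add_one_div_four_mul_sq {d : ℝ} (hd : 0 < d) :
    √(1 + 1 / (4 * d ^ 2)) = √(4 * d ^ 2 + 1) / (2 * d) := by
  have hdiv : 1 + 1 / (4 * d ^ 2) = (4 * d ^ 2 + 1) / (2 * d) ^ 2 := by
    field_simp
    ring
  rw [hdiv, sqrt_div (by positivity), sqrt_sq (by positivity)]

/-- In Corollary 4, `η* = 2 - 1/(2D) - √(1+1/(4D²))` satisfies
`(1-η*)(1-D(1-η*)) = √(4D²+1) - 2D` and globally maximizes
`η ↦ e^{-η}(1-η)(1-D(1-η))` over `ℝ`. -/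
theorem eta_star_opt (D : ℕ) (hD : 0 < D) :
    (1 - (2 - 1 / (2 * (D : ℝ)) - Real.sqrt (1 + 1 / (4 * (D : ℝ) ^ 2)))) *
        (1 - (D : ℝ) * (1 - (2 - 1 / (2 * (D : ℝ)) - Real.sqrt (1 + 1 / (4 * (D : ℝ) ^ 2))))) =
      Real.sqrt (4 * (D : ℝ) ^ 2 + 1) - 2 * D ∧
    ∀ η : ℝ, Real.exp (-η) * (1 - η) * (1 - (D : ℝ) * (1 - η)) ≤
      Real.exp (-(2 - 1 / (2 * (D : ℝ)) - Real.sqrt (1 + 1 / (4 * (D : ℝ) ^ 2)))) *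
        (Real.sqrt (4 * (D : ℝ) ^ 2 + 1) - 2 * D) := by
  have hd : (0 : ℝ) < D := by exact_mod_cast hD
  rw [sqrt_one_add_one_div_four_mul_sq hd]
  generalize (D : ℝ) = d at hd ⊢
  have hsq : √(4 * d ^ 2 + 1) ^ 2 = 4 * d ^ 2 + 1 := sq_sqrt (by positivity)
  have hle : 2 * d ≤ √(4 * d ^ 2 + 1) := le_sqrt_of_sq_le (by linarith)
  generalize √(4 * d ^ 2 + 1) = s at hsq hle ⊢
  set e := 2 - 1 / (2 * d) - s / (2 * d) with he
  have hlin : 2 * d * (1 - e) = 1 + s - 2 * d := by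
    rw [he]
    field_simp
    ring
  have hval : (1 - e) * (1 - d * (1 - e)) = s - 2 * d := by
    refine mul_left_cancel₀ (by positivity : 4 * d ≠ 0) ?_
    linear_combination (2 - 2 * d * (1 - e) - (1 + s - 2 * d)) * hlin - hsq
  refine ⟨hval, fun η => ?_⟩
  have hmax := exp_mul_quadratic_le_of_critical (a := 1 - e) hd.le (by linarith)
    (by linarith) (1 - η)
  rw [hval, sub_eq_add_neg 1 η, sub_eq_add_neg 1 e, exp_add, exp_add, mul_assoc, mul_assoc,
    ← sub_eq_add_neg] at hmax
  rw [mul_assoc]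
  exact le_of_mul_le_mul_left hmax (exp_pos 1)
end

section
/- Let D > 0, h ≥ 0, η > 0 with h + η > 0 and h + η ≤ 1, and let f₁ > 0 be a real number. For α ∈ [0, η] define F^H(α) := (1/D)·(h + α)·ln((h + η)/(h + α)) and F^L(α) := ((h + α)/(h + η))·f₁. Set α* := max{ (h+η)·exp(−D·f₁/(h+η)) − h, (h+η)·e^{−1} − h, 0 }. Then α* ∈ [0, η], min(F^H(α*), F^L(α*)) = F^H(α*), and for every α ∈ [0, η]: min(F^H(α), F^L(α)) ≤ F^H(α*). -/
open Real

/-- The concave function `x ↦ x * log (H / x)` lies below its tangent line at `y`. -/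
lemma mul_log_div_le_tangent {H x y : ℝ} (hH : 0 < H) (hx : 0 ≤ x) (hy : 0 < y) :
    x * Real.log (H / x) ≤ y * Real.log (H / y) + (x - y) * (Real.log (H / y) - 1) := by
  rcases hx.eq_or_lt with rfl | hx
  · simp only [zero_mul]
    linarith
  · have hlog : x * Real.log (y / x) ≤ y - x := by
      have := mul_le_mul_of_nonneg_left (Real.log_le_sub_one_of_pos (div_pos hy hx)) hx.le
      rwa [mul_sub, mul_div_cancel₀ _ hx.ne', mul_one] at this
    have hsplit : Real.log (H / x) = Real.log (H / y) + Real.log (y / x) := by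
      rw [Real.log_div hH.ne' hx.ne', Real.log_div hH.ne' hy.ne', Real.log_div hy.ne' hx.ne']
      ring
    rw [hsplit]
    linarith

lemma log_div_mul_exp_neg {H : ℝ} (hH : 0 < H) (c : ℝ) :
    Real.log (H / (H * Real.exp (-c))) = c := by
  rw [div_mul_cancel_left₀ hH.ne', ← Real.exp_neg, neg_neg, Real.log_exp]

lemma log_div_le_of_mul_exp_neg_le {H y c : ℝ} (hH : 0 < H) (hy : H * Real.exp (-c) ≤ y) :
    Real.log (H / y) ≤ c := by
  have hpos : 0 < H * Real.exp (-c) := mul_pos hH (Real.exp_pos _)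
  rw [← log_div_mul_exp_neg hH c]
  exact Real.log_le_log (div_pos hH (hpos.trans_le hy)) (div_le_div_of_nonneg_left hH.le hpos hy)

/-- Optimization content of Proposition 2 (no-LP-phases heuristic with `η ≤ 1 - h`): the choice
`α* = max{(h+η)e^{-Df₁/(h+η)} - h, (h+η)e^{-1} - h, 0}` lies in `[0, η]`, satisfies
`min(F^H(α*), F^L(α*)) = F^H(α*)`, and maximizes `α ↦ min(F^H(α), F^L(α))` over `[0, η]`. -/
theorem no_lp_phase_opt (D h η f₁ : ℝ) (hD : 0 < D) (hh : 0 ≤ h) (hη : 0 < η)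
    (hpos : 0 < h + η) (hle : h + η ≤ 1) (hf₁ : 0 < f₁) :
    let FH : ℝ → ℝ := fun α => 1 / D * (h + α) * Real.log ((h + η) / (h + α))
    let FL : ℝ → ℝ := fun α => (h + α) / (h + η) * f₁
    let αs : ℝ := max (max ((h + η) * Real.exp (-(D * f₁) / (h + η)) - h)
      ((h + η) * Real.exp (-1) - h)) 0
    (0 ≤ αs ∧ αs ≤ η) ∧ min (FH αs) (FL αs) = FH αs ∧
      ∀ α : ℝ, 0 ≤ α → α ≤ η → min (FH α) (FL α) ≤ FH αs := by
  intro FH FL αs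
  set H := h + η with hH
  obtain ⟨c, hc⟩ : ∃ c, c = D * f₁ / H := ⟨_, rfl⟩
  have hc0 : 0 < c := hc ▸ by positivity
  have hfc : f₁ = c * H / D := by rw [hc]; field_simp
  have hαs : αs = max (max (H * Real.exp (-c) - h) (H * Real.exp (-1) - h)) 0 := by
    simp only [αs, hc, ← hH, neg_div]
  have hFH : ∀ α, FH α = (h + α) * Real.log (H / (h + α)) / D := fun α => by
    simp only [FH]; ring
  have hFL : ∀ α, FL α = (h + α) * c / D := fun α => by
    simp only [FL, ← hH]; rw [hfc]; field_simp
  clear_value FH FL αs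
  have hle_c : H * Real.exp (-c) ≤ h + αs := by
    have : H * Real.exp (-c) - h ≤ αs := hαs ▸ (le_max_left _ _).trans (le_max_left _ _)
    linarith
  have hle_one : H * Real.exp (-1) ≤ h + αs := by
    have : H * Real.exp (-1) - h ≤ αs := hαs ▸ (le_max_right _ _).trans (le_max_left _ _)
    linarith
  have hαs0 : 0 ≤ αs := hαs ▸ le_max_right _ _
  have hy : 0 < h + αs := (mul_pos hpos (Real.exp_pos _)).trans_le hle_one
  have hexp : ∀ t : ℝ, 0 ≤ t → H * Real.exp (-t) - h ≤ η := fun t ht => by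
    have := mul_le_mul_of_nonneg_left (Real.exp_le_one_iff.2 (neg_nonpos.2 ht)) hpos.le
    linarith
  refine ⟨⟨hαs0, ?_⟩, ?_, fun α hα _ => ?_⟩
  · rw [hαs]
    exact max_le (max_le (hexp c hc0.le) (hexp 1 zero_le_one)) hη.le
  · rw [min_eq_left_iff, hFH, hFL]
    have := log_div_le_of_mul_exp_neg_le hpos hle_c
    gcongr
  · have htangent := mul_log_div_le_tangent hpos (add_nonneg hh hα) hy
    rcases le_or_gt αs α with hge | hlt
    · refine (min_le_left _ _).trans ?_
      rw [hFH, hFH]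
      have hlog := log_div_le_of_mul_exp_neg_le hpos hle_one
      refine div_le_div_of_nonneg_right ?_ hD.le
      nlinarith [mul_nonneg (sub_nonneg.2 hge) (sub_nonneg.2 hlog)]
    · have hαs' : αs = max (H * Real.exp (-c) - h) (H * Real.exp (-1) - h) := by
        rcases max_choice (max (H * Real.exp (-c) - h) (H * Real.exp (-1) - h)) 0 with h' | h'
        · rw [hαs, h']
        · linarith
      rcases max_choice (H * Real.exp (-c) - h) (H * Real.exp (-1) - h) with h' | h'
      · refine (min_le_right _ _).trans ?_
        have hs : h + αs = H * Real.exp (-c) := by linarith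
        have hlog : Real.log (H / (h + αs)) = c := by rw [hs, log_div_mul_exp_neg hpos]
        rw [hFL, hFH, hlog]
        gcongr
      · refine (min_le_left _ _).trans ?_
        have hs : h + αs = H * Real.exp (-1) := by linarith
        have hlog : Real.log (H / (h + αs)) = 1 := by rw [hs, log_div_mul_exp_neg hpos]
        rw [hlog] at htangent
        rw [hFH, hFH, hlog]
        refine div_le_div_of_nonneg_right ?_ hD.le
        linarith
end
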